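/- Let P be a finite set of jobs containing N_0 ≥ 1 jobs of color 0 and N_1 ≥ 1 jobs of color 1. Then for every integer k with 1 ≤ k ≤ min{N_0, N_1}, there exists a schedule S of P (a list containing each job of P exactly once) whose total number of color changes satisfies C(S) = k. -/

import Mathlib

/-- A job is a pair `(t, c)` of a real process temperature `t` and a color `c ∈ {0,1}`. -/
abbrev Job := ℝ × Fin 2

/-- Total number of color changes `C(S) = Σ_{i=1}^{N-1} |c(p_{i+1}) - c(p_i)|`. -/
def colorChanges : List Job → ℕ
  | p :: q :: rest => Nat.dist (p.2 : ℕ) (q.2 : ℕ) + colorChanges (q :: rest)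
  | _ => 0

/-!
Start with a job of a most frequent color and switch colors after every single job until only one
change is left; then put the remaining jobs of the current color before those of the other one.
For `k` changes this takes at least `(k + 1) / 2` jobs of the first color and `k / 2` of the other,
which is what `k < N0 + N1` and `k ≤ 2 * min N0 N1` provide.
-/

theorem colorChanges_cons_congr {p q : Job} (h : p.2 = q.2) (S : List Job) :
    colorChanges (p :: S) = colorChanges (q :: S) := by
  cases S with
  | nil => rfl
  | cons r S => rw [colorChanges, colorChanges, h]

theorem colorChanges_cons_cons_of_eq {p q : Job} (h : p.2 = q.2) (S : List Job) :
    colorChanges (p :: q :: S) = colorChanges (q :: S) := by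
  rw [colorChanges, h, Nat.dist_self, Nat.zero_add]

theorem colorChanges_cons_cons_of_ne {p q : Job} (h : p.2 ≠ q.2) (S : List Job) :
    colorChanges (p :: q :: S) = colorChanges (q :: S) + 1 := by
  have dist_eq_one : ∀ c d : Fin 2, c ≠ d → Nat.dist c d = 1 := by decide
  rw [colorChanges, dist_eq_one _ _ h, Nat.add_comm]

theorem colorChanges_cons_append_of_forall_eq {p : Job} {A : List Job}
    (hA : ∀ q ∈ A, q.2 = p.2) (S : List Job) :
    colorChanges (p :: (A ++ S)) = colorChanges (p :: S) := by
  induction A with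
  | nil => rfl
  | cons q A ih =>
    obtain ⟨hq, hA⟩ := List.forall_mem_cons.mp hA
    rw [List.cons_append, colorChanges_cons_cons_of_eq hq.symm,
      colorChanges_cons_congr hq, ih hA]

theorem colorChanges_cons_of_forall_eq {p : Job} {A : List Job} (hA : ∀ q ∈ A, q.2 = p.2) :
    colorChanges (p :: A) = 0 := by
  simpa [colorChanges] using colorChanges_cons_append_of_forall_eq hA []

theorem exists_perm_append_colorChanges_cons_eq {c d : Fin 2} (hcd : c ≠ d) {k : ℕ} (hk : 1 ≤ k)
    {a : Job} {A B : List Job} (ha : a.2 = c) (hA : ∀ p ∈ A, p.2 = c) (hB : ∀ p ∈ B, p.2 = d)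
    (hkA : k ≤ 2 * A.length + 1) (hkB : k ≤ 2 * B.length) :
    ∃ S : List Job, S.Perm (A ++ B) ∧ colorChanges (a :: S) = k := by
  induction k, hk using Nat.le_induction generalizing c d a A B with
  | base =>
    obtain ⟨b, B, rfl⟩ := List.exists_cons_of_length_pos (show 0 < B.length by lia)
    obtain ⟨hb, hB⟩ := List.forall_mem_cons.mp hB
    refine ⟨A ++ b :: B, .refl _, ?_⟩
    rw [colorChanges_cons_append_of_forall_eq (by simpa only [ha] using hA),
      colorChanges_cons_cons_of_ne (by rwa [ha, hb]),
      colorChanges_cons_of_forall_eq (by simpa only [hb] using hB)]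
  | succ k _ ih =>
    obtain ⟨b, B, rfl⟩ := List.exists_cons_of_length_pos (show 0 < B.length by lia)
    obtain ⟨hb, hB⟩ := List.forall_mem_cons.mp hB
    rw [List.length_cons] at hkB
    obtain ⟨S, hS, hSk⟩ := ih hcd.symm hb hB hA (by lia) (by lia)
    refine ⟨b :: S, ?_, ?_⟩
    · exact ((hS.trans List.perm_append_comm).cons b).trans List.perm_middle.symm
    · rw [colorChanges_cons_cons_of_ne (by rwa [ha, hb]), hSk]

theorem filter_color_add_filter_color {α : Type*} (color : α → Fin 2) {c d : Fin 2} (hcd : c ≠ d)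
    (P : Multiset α) :
    P.filter (fun p => color p = c) + P.filter (fun p => color p = d) = P := by
  have eq_iff_ne (p : α) : color p = d ↔ ¬color p = c := by lia
  simp only [eq_iff_ne, Multiset.filter_add_not]

theorem exists_schedule_colorChanges_eq_of_lt {c d : Fin 2} (hcd : c ≠ d) (P : Multiset Job)
    {k : ℕ} (hk : 1 ≤ k) (hkc : k < 2 * (P.filter (fun p => p.2 = c)).card)
    (hkd : k ≤ 2 * (P.filter (fun p => p.2 = d)).card) :
    ∃ S : List Job, (S : Multiset Job) = P ∧ colorChanges S = k := by
  have mem_color (e : Fin 2) : ∀ p ∈ (P.filter (fun p => p.2 = e)).toList, p.2 = e := by simp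
  rw [← Multiset.length_toList] at hkc hkd
  obtain ⟨a, A, hA⟩ : ∃ a A, (P.filter (fun p => p.2 = c)).toList = a :: A :=
    List.exists_cons_of_length_pos (by lia)
  obtain ⟨ha, hAc⟩ := List.forall_mem_cons.mp (hA ▸ mem_color c)
  rw [hA, List.length_cons] at hkc
  obtain ⟨S, hS, hSk⟩ :=
    exists_perm_append_colorChanges_cons_eq hcd hk ha hAc (mem_color d) (by lia) hkd
  refine ⟨a :: S, ?_, hSk⟩
  rw [Multiset.coe_eq_coe.mpr (hS.cons a), ← List.cons_append, ← hA, ← Multiset.coe_add,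
    Multiset.coe_toList, Multiset.coe_toList, filter_color_add_filter_color Prod.snd hcd]

theorem exists_schedule_with_k_changes_general (P : Multiset Job) (N0 N1 : ℕ)
    (hN0 : N0 = (P.filter (fun p => p.2 = 0)).card)
    (hN1 : N1 = (P.filter (fun p => p.2 = 1)).card)
    (k : ℕ) (hk1 : 1 ≤ k) (hk2 : k ≤ 2 * min N0 N1) (hk3 : k < N0 + N1) :
    ∃ S : List Job, (S : Multiset Job) = P ∧ colorChanges S = k := by
  rcases le_total N0 N1 with h | h
  · exact exists_schedule_colorChanges_eq_of_lt one_ne_zero P hk1 (by lia) (by lia)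
  · exact exists_schedule_colorChanges_eq_of_lt zero_ne_one P hk1 (by lia) (by lia)

/-- For a finite job set with `N₀ ≥ 1` jobs of color `0` and `N₁ ≥ 1` jobs of color `1`,
and any `k` with `1 ≤ k ≤ min N₀ N₁`, there is a schedule of the job set with exactly
`k` color changes. -/
theorem exists_schedule_with_k_changes (P : Finset Job) (N0 N1 : ℕ)
    (hN0 : N0 = (P.filter (fun p => p.2 = 0)).card)
    (hN1 : N1 = (P.filter (fun p => p.2 = 1)).card)
    (h0 : 1 ≤ N0) (h1 : 1 ≤ N1)
    (k : ℕ) (hk1 : 1 ≤ k) (hk2 : k ≤ min N0 N1) :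
    ∃ S : List Job, (S : Multiset Job) = P.val ∧ colorChanges S = k :=
  exists_schedule_with_k_changes_general P.val N0 N1 hN0 hN1 k hk1 (by lia) (by lia)
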